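/- Let I and J be *-homogeneous ideals of D and let K be a *-homogeneous ideal with K ⊆ M(I) ∩ M(J). Then M(I) = M(J) = M(K). Consequently, if M(I) ≠ M(J), then M(I) ∩ M(J) contains no *-homogeneous ideal. -/

import Mathlib

open scoped nonZeroDivisors

/-- A star operation on the nonzero fractional ideals of an integral domain `D`
with quotient field `K`: it fixes nonzero principal fractional ideals, commutes with
multiplication by nonzero principal fractional ideals, is extensive, monotone and
idempotent (on nonzero fractional ideals). -/
structure StarOperation (D K : Type*) [CommRing D] [IsDomain D] [Field K]
    [Algebra D K] [IsFractionRing D K] where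
  star : FractionalIdeal D⁰ K → FractionalIdeal D⁰ K
  star_spanSingleton : ∀ x : K, x ≠ 0 →
    star (FractionalIdeal.spanSingleton D⁰ x) = FractionalIdeal.spanSingleton D⁰ x
  star_smul : ∀ (x : K) (I : FractionalIdeal D⁰ K), x ≠ 0 → I ≠ 0 →
    star (FractionalIdeal.spanSingleton D⁰ x * I) = FractionalIdeal.spanSingleton D⁰ x * star I
  le_star : ∀ I : FractionalIdeal D⁰ K, I ≠ 0 → I ≤ star I
  star_mono : ∀ I J : FractionalIdeal D⁰ K, I ≠ 0 → J ≠ 0 → I ≤ J → star I ≤ star J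
  star_idem : ∀ I : FractionalIdeal D⁰ K, I ≠ 0 → star (star I) = star I

namespace StarOperation

variable {D K : Type*} [CommRing D] [IsDomain D] [Field K] [Algebra D K] [IsFractionRing D K]
variable (s : StarOperation D K)

/-- `*` has finite character: for every nonzero fractional ideal `I`, `I^*` is the union
of `J^*` over the nonzero finitely generated fractional subideals `J` of `I`. -/
def FiniteCharacter : Prop :=
  ∀ I : FractionalIdeal D⁰ K, I ≠ 0 → ∀ x ∈ s.star I,
    ∃ J : FractionalIdeal D⁰ K, J ≠ 0 ∧ (J : Submodule D K).FG ∧ J ≤ I ∧ x ∈ s.star J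

/-- A (nonzero) integral ideal `I` of `D` is a `*`-ideal if `I^* = I`. -/
def IsStarIdeal (I : Ideal D) : Prop :=
  I ≠ ⊥ ∧ s.star (I : FractionalIdeal D⁰ K) = (I : FractionalIdeal D⁰ K)

/-- An integral ideal `I` of `D` is a `*`-ideal of finite type if `I = J^*` for some
nonzero finitely generated ideal `J`. -/
def IsFiniteTypeStarIdeal (I : Ideal D) : Prop :=
  ∃ J : Ideal D, J ≠ ⊥ ∧ J.FG ∧
    s.star (J : FractionalIdeal D⁰ K) = (I : FractionalIdeal D⁰ K)

/-- A maximal `*`-ideal: maximal among proper integral `*`-ideals. -/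
def IsMaxStarIdeal (M : Ideal D) : Prop :=
  M ≠ ⊤ ∧ s.IsStarIdeal M ∧ ∀ J : Ideal D, J ≠ ⊤ → s.IsStarIdeal J → M ≤ J → J = M

/-- `I` is `*`-homogeneous: a proper `*`-ideal of finite type such that `(J + J')^* ≠ D`
for every pair `J`, `J'` of proper `*`-ideals of finite type containing `I`. -/
def IsHomog (I : Ideal D) : Prop :=
  I ≠ ⊤ ∧ s.IsStarIdeal I ∧ s.IsFiniteTypeStarIdeal I ∧
    ∀ J J' : Ideal D, J ≠ ⊤ → J' ≠ ⊤ → s.IsStarIdeal J → s.IsStarIdeal J' →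
      s.IsFiniteTypeStarIdeal J → s.IsFiniteTypeStarIdeal J' → I ≤ J → I ≤ J' →
      s.star ((J + J' : Ideal D) : FractionalIdeal D⁰ K) ≠ 1

/-- The set `M(I) = {x ∈ D : (xD + I)^* ≠ D}` attached to an ideal `I`. -/
def MSet (I : Ideal D) : Set D :=
  {x : D | s.star ((Ideal.span {x} + I : Ideal D) : FractionalIdeal D⁰ K) ≠ 1}

/-- `A` and `B` are `*`-comaximal if `(A + B)^* = D`. -/
def StarComaximal (A B : Ideal D) : Prop :=
  s.star ((A + B : Ideal D) : FractionalIdeal D⁰ K) = 1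

/-- An integral ideal `I` is `*`-invertible if `(I · I⁻¹)^* = D`. -/
def StarInvertible (I : Ideal D) : Prop :=
  s.star ((I : FractionalIdeal D⁰ K) * (I : FractionalIdeal D⁰ K)⁻¹) = 1

/-- `D` is a `*`-SH domain: every principal ideal generated by a nonzero nonunit is a
`*`-product of finitely many `*`-homogeneous ideals. -/
def IsSHDomain : Prop :=
  ∀ x : D, x ≠ 0 → ¬IsUnit x →
    ∃ T : Multiset (Ideal D), (∀ J ∈ T, s.IsHomog J) ∧
      s.star ((T.prod : Ideal D) : FractionalIdeal D⁰ K) =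
        ((Ideal.span {x} : Ideal D) : FractionalIdeal D⁰ K)

/-- `D` has finite `*`-character: every nonzero nonunit lies in only finitely many
maximal `*`-ideals. -/
def FiniteStarCharacter : Prop :=
  ∀ x : D, x ≠ 0 → ¬IsUnit x → {P : Ideal D | s.IsMaxStarIdeal P ∧ x ∈ P}.Finite

end StarOperation

/-!
Call an ideal `A` small relative to a `*`-homogeneous ideal `I` if `(A + I)^* ≠ D`, so that `M(I)`
is the set of generators of the small principal ideals. Since `(A + I)^*` is a `*`-ideal of finite
type containing `I` whenever `A` is finitely generated, homogeneity makes a sum of two small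
finitely generated ideals small. Hence a finitely generated ideal contained in `M(I)` is small, and
`L ⊆ M(I)` forces `(I + L)^* ≠ D`. This condition is symmetric in `I` and `L`, and it
implies `M(I) ⊆ M(L)`: if `x ∈ M(I)` and `L = B^*` with `B` finitely generated, then `xD + B` is a
sum of two small ideals, so `(xD + B + I)^* ≠ D` and a fortiori `(xD + L)^* = (xD + B)^* ≠ D`.
-/

namespace StarOperation

variable {D K : Type*} [CommRing D] [IsDomain D] [Field K] [Algebra D K] [IsFractionRing D K]
variable {s : StarOperation D K}

section Closure

variable (s)

theorem star_one : s.star 1 = 1 := by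
  simpa only [FractionalIdeal.spanSingleton_one] using s.star_spanSingleton 1 one_ne_zero

theorem star_add_star (I : FractionalIdeal D⁰ K) {J : FractionalIdeal D⁰ K} (hJ : J ≠ 0) :
    s.star (I + s.star J) = s.star (I + J) := by
  have hIJ : I + J ≠ 0 := ne_bot_of_le_ne_bot hJ le_sup_right
  have hle : I + J ≤ I + s.star J := sup_le_sup_left (s.le_star J hJ) I
  have hIJ' : I + s.star J ≠ 0 := ne_bot_of_le_ne_bot hIJ hle
  refine le_antisymm ?_ (s.star_mono _ _ hIJ hIJ' hle)
  rw [← s.star_idem (I + J) hIJ]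
  refine s.star_mono _ _ hIJ' (ne_bot_of_le_ne_bot hIJ (s.le_star _ hIJ)) (sup_le ?_ ?_)
  · exact le_sup_left.trans (s.le_star _ hIJ)
  · exact s.star_mono _ _ hJ hIJ le_sup_right

theorem star_star_add_star {I J : FractionalIdeal D⁰ K} (hI : I ≠ 0) (hJ : J ≠ 0) :
    s.star (s.star I + s.star J) = s.star (I + J) := by
  rw [s.star_add_star _ hJ, add_comm, s.star_add_star _ hI, add_comm]

theorem star_le_one {I : FractionalIdeal D⁰ K} (hI : I ≠ 0) (hI1 : I ≤ 1) : s.star I ≤ 1 :=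
  (s.star_mono I 1 hI one_ne_zero hI1).trans_eq s.star_one

theorem star_coeIdeal_eq_one_of_le {A B : Ideal D} (hA : A ≠ ⊥) (hAB : A ≤ B)
    (h : s.star (A : FractionalIdeal D⁰ K) = 1) : s.star (B : FractionalIdeal D⁰ K) = 1 := by
  have hA' : (A : FractionalIdeal D⁰ K) ≠ 0 := FractionalIdeal.coeIdeal_ne_zero.mpr hA
  have hB' : (B : FractionalIdeal D⁰ K) ≠ 0 :=
    FractionalIdeal.coeIdeal_ne_zero.mpr (ne_bot_of_le_ne_bot hA hAB)
  refine le_antisymm (s.star_le_one hB' FractionalIdeal.coeIdeal_le_one) ?_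
  rw [← h]
  exact s.star_mono _ _ hA' hB' ((FractionalIdeal.coeIdeal_le_coeIdeal K).mpr hAB)

theorem star_coeIdeal_add_of_star_eq (A : Ideal D) {B C : Ideal D} (hB : B ≠ ⊥)
    (h : s.star (B : FractionalIdeal D⁰ K) = C) :
    s.star ((A + C : Ideal D) : FractionalIdeal D⁰ K) =
      s.star ((A + B : Ideal D) : FractionalIdeal D⁰ K) := by
  rw [Ideal.add_eq_sup, Ideal.add_eq_sup, FractionalIdeal.coeIdeal_sup,
    FractionalIdeal.coeIdeal_sup, ← h,
    s.star_add_star _ (FractionalIdeal.coeIdeal_ne_zero.mpr hB)]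

end Closure

theorem IsFiniteTypeStarIdeal.isStarIdeal {I : Ideal D} (hI : s.IsFiniteTypeStarIdeal I) :
    s.IsStarIdeal I := by
  obtain ⟨A, hA, -, hAI⟩ := hI
  have hA' : (A : FractionalIdeal D⁰ K) ≠ 0 := FractionalIdeal.coeIdeal_ne_zero.mpr hA
  constructor
  · rw [← FractionalIdeal.coeIdeal_ne_zero (K := K), ← hAI]
    exact ne_bot_of_le_ne_bot hA' (s.le_star _ hA')
  · rw [← hAI, s.star_idem _ hA']

theorem IsFiniteTypeStarIdeal.exists_star_add_eq {I A : Ideal D}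
    (hI : s.IsFiniteTypeStarIdeal I) (hA : A.FG) :
    ∃ C : Ideal D, s.IsFiniteTypeStarIdeal C ∧ I ≤ C ∧
      s.star ((A + I : Ideal D) : FractionalIdeal D⁰ K) = C := by
  have hAI : ((A + I : Ideal D) : FractionalIdeal D⁰ K) ≠ 0 :=
    FractionalIdeal.coeIdeal_ne_zero.mpr (ne_bot_of_le_ne_bot hI.isStarIdeal.1 le_sup_right)
  obtain ⟨B, hB, hBfg, hBI⟩ := hI
  obtain ⟨C, hC⟩ := FractionalIdeal.le_one_iff_exists_coeIdeal.mp
    (s.star_le_one hAI FractionalIdeal.coeIdeal_le_one)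
  refine ⟨C, ⟨A + B, ne_bot_of_le_ne_bot hB le_sup_right, Submodule.FG.sup hA hBfg, ?_⟩, ?_,
    hC.symm⟩
  · rw [hC, s.star_coeIdeal_add_of_star_eq A hB hBI]
  · rw [← FractionalIdeal.coeIdeal_le_coeIdeal K, hC]
    exact ((FractionalIdeal.coeIdeal_le_coeIdeal K).mpr le_sup_right).trans (s.le_star _ hAI)

theorem StarComaximal.symm {A B : Ideal D} (h : s.StarComaximal A B) : s.StarComaximal B A := by
  rwa [StarComaximal, add_comm]

theorem IsHomog.isFiniteTypeStarIdeal {I : Ideal D} (hI : s.IsHomog I) :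
    s.IsFiniteTypeStarIdeal I :=
  hI.2.2.1

theorem IsHomog.not_starComaximal_add {I A B : Ideal D} (hI : s.IsHomog I) (hA : A.FG) (hB : B.FG)
    (hAI : ¬s.StarComaximal A I) (hBI : ¬s.StarComaximal B I) : ¬s.StarComaximal (A + B) I := by
  have ne_zero (E : Ideal D) : ((E + I : Ideal D) : FractionalIdeal D⁰ K) ≠ 0 :=
    FractionalIdeal.coeIdeal_ne_zero.mpr
      (ne_bot_of_le_ne_bot hI.isFiniteTypeStarIdeal.isStarIdeal.1 le_sup_right)
  have ne_top {E C : Ideal D} (hE : ¬s.StarComaximal E I)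
      (hC : s.star ((E + I : Ideal D) : FractionalIdeal D⁰ K) = C) : C ≠ ⊤ := by
    rintro rfl
    exact hE hC
  obtain ⟨C, hCft, hIC, hC⟩ := hI.isFiniteTypeStarIdeal.exists_star_add_eq hA
  obtain ⟨C', hCft', hIC', hC'⟩ := hI.isFiniteTypeStarIdeal.exists_star_add_eq hB
  have hCC' := hI.2.2.2 C C' (ne_top hAI hC) (ne_top hBI hC') hCft.isStarIdeal hCft'.isStarIdeal
    hCft hCft' hIC hIC'
  have hsum : A + I + (B + I) = A + B + I := by rw [add_add_add_comm, add_idem]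
  rwa [Ideal.add_eq_sup, FractionalIdeal.coeIdeal_sup, ← hC, ← hC',
    s.star_star_add_star (ne_zero A) (ne_zero B), ← FractionalIdeal.coeIdeal_sup,
    ← Ideal.add_eq_sup, hsum] at hCC'

theorem IsHomog.not_starComaximal_of_fg_of_subset_MSet {I A : Ideal D} (hI : s.IsHomog I)
    (hA : A.FG) (hAI : (A : Set D) ⊆ s.MSet I) : ¬s.StarComaximal A I := by
  induction A, hA using Submodule.fg_induction with
  | singleton x => exact hAI (Ideal.mem_span_singleton_self x)
  | sup B C hB hC ihB ihC =>
    have hBI : (B : Set D) ⊆ s.MSet I := fun _ hx ↦ hAI (Ideal.mem_sup_left hx)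
    have hCI : (C : Set D) ⊆ s.MSet I := fun _ hx ↦ hAI (Ideal.mem_sup_right hx)
    exact hI.not_starComaximal_add hB hC (ihB hBI) (ihC hCI)

theorem IsHomog.not_starComaximal_of_subset_MSet {I L : Ideal D} (hI : s.IsHomog I)
    (hL : s.IsFiniteTypeStarIdeal L) (hLI : (L : Set D) ⊆ s.MSet I) : ¬s.StarComaximal I L := by
  obtain ⟨B, hB, hBfg, hBL⟩ := hL
  have hle : B ≤ L := by
    rw [← FractionalIdeal.coeIdeal_le_coeIdeal K, ← hBL]
    exact s.le_star _ (FractionalIdeal.coeIdeal_ne_zero.mpr hB)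
  have hBI : ¬s.StarComaximal B I :=
    hI.not_starComaximal_of_fg_of_subset_MSet hBfg (subset_trans hle hLI)
  rw [StarComaximal, s.star_coeIdeal_add_of_star_eq I hB hBL]
  exact fun h ↦ hBI (StarComaximal.symm h)

theorem IsHomog.MSet_subset_of_not_starComaximal {I L : Ideal D} (hI : s.IsHomog I)
    (hL : s.IsFiniteTypeStarIdeal L) (hIL : ¬s.StarComaximal I L) : s.MSet I ⊆ s.MSet L := by
  intro x hx hxL
  obtain ⟨B, hB, hBfg, hBL⟩ := hL
  rw [StarComaximal, s.star_coeIdeal_add_of_star_eq I hB hBL] at hIL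
  rw [s.star_coeIdeal_add_of_star_eq (Ideal.span {x}) hB hBL] at hxL
  have hxB : ¬s.StarComaximal (Ideal.span {x} + B) I :=
    hI.not_starComaximal_add (Submodule.fg_span_singleton x) hBfg hx fun h ↦ hIL h.symm
  exact hxB (s.star_coeIdeal_eq_one_of_le (ne_bot_of_le_ne_bot hB le_sup_right) le_sup_left hxL)

theorem IsHomog.MSet_eq_of_subset_MSet {I L : Ideal D} (hI : s.IsHomog I) (hL : s.IsHomog L)
    (hLI : (L : Set D) ⊆ s.MSet I) : s.MSet I = s.MSet L := by
  have hIL : ¬s.StarComaximal I L :=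
    hI.not_starComaximal_of_subset_MSet hL.isFiniteTypeStarIdeal hLI
  exact Set.Subset.antisymm
    (hI.MSet_subset_of_not_starComaximal hL.isFiniteTypeStarIdeal hIL)
    (hL.MSet_subset_of_not_starComaximal hI.isFiniteTypeStarIdeal fun h ↦ hIL h.symm)

end StarOperation

theorem MSet_eq_of_homog_subset_general {D K : Type*} [CommRing D] [IsDomain D] [Field K]
    [Algebra D K] [IsFractionRing D K] (s : StarOperation D K) :
    (∀ I J L : Ideal D, s.IsHomog I → s.IsHomog J → s.IsHomog L →
      (L : Set D) ⊆ s.MSet I ∩ s.MSet J → s.MSet I = s.MSet J ∧ s.MSet J = s.MSet L) ∧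
    (∀ I J : Ideal D, s.IsHomog I → s.IsHomog J → s.MSet I ≠ s.MSet J →
      ¬∃ L : Ideal D, s.IsHomog L ∧ (L : Set D) ⊆ s.MSet I ∩ s.MSet J) := by
  have MSet_eq (I J L : Ideal D) (hI : s.IsHomog I) (hJ : s.IsHomog J) (hL : s.IsHomog L)
      (hLIJ : (L : Set D) ⊆ s.MSet I ∩ s.MSet J) :
      s.MSet I = s.MSet J ∧ s.MSet J = s.MSet L := by
    have hIL : s.MSet I = s.MSet L :=
      hI.MSet_eq_of_subset_MSet hL (hLIJ.trans Set.inter_subset_left)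
    have hJL : s.MSet J = s.MSet L :=
      hJ.MSet_eq_of_subset_MSet hL (hLIJ.trans Set.inter_subset_right)
    exact ⟨hIL.trans hJL.symm, hJL⟩
  refine ⟨MSet_eq, ?_⟩
  rintro I J hI hJ hIJ ⟨L, hL, hLIJ⟩
  exact hIJ (MSet_eq I J L hI hJ hL hLIJ).1

/-- If `I`, `J` are `*`-homogeneous and `L` is a `*`-homogeneous ideal with
`L ⊆ M(I) ∩ M(J)`, then `M(I) = M(J) = M(L)`. Consequently, if `M(I) ≠ M(J)` then
`M(I) ∩ M(J)` contains no `*`-homogeneous ideal. -/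
theorem MSet_eq_of_homog_subset {D K : Type*} [CommRing D] [IsDomain D] [Field K]
    [Algebra D K] [IsFractionRing D K] (s : StarOperation D K) (hs : s.FiniteCharacter) :
    (∀ I J L : Ideal D, s.IsHomog I → s.IsHomog J → s.IsHomog L →
      (L : Set D) ⊆ s.MSet I ∩ s.MSet J → s.MSet I = s.MSet J ∧ s.MSet J = s.MSet L) ∧
    (∀ I J : Ideal D, s.IsHomog I → s.IsHomog J → s.MSet I ≠ s.MSet J →
      ¬∃ L : Ideal D, s.IsHomog L ∧ (L : Set D) ⊆ s.MSet I ∩ s.MSet J) :=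
  MSet_eq_of_homog_subset_general s
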